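/- Let 0 < ε ≤ 1 and δ > 0, and suppose the parameter b satisfies b/R^(1+ε) ≥ ((1+ε)^(3ε−1−⌊ε⌋)/(2εδ)^ε)·(γ_d/R)^(1−ε), where ⌊ε⌋ is the integer part of ε. If a : ℕ → E is an ℓ-margitron run of length t_c ≥ 1 that has converged after t_c updates, i.e. ⟨a_{t_c}, y_k⟩ > b·‖a_{t_c}‖^(1−ε) for every k ∈ {1, …, n}, then the achieved directional margin γ'_d := min_k ⟨a_{t_c}/‖a_{t_c}‖, y_k⟩ satisfies γ'_d/γ_d ≥ (δ + 1 + ε)^(−1). -/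

import Mathlib

open scoped RealInnerProductSpace

/-!
Let `r t = ‖a t‖`. Expanding `‖a (t + 1)‖ ^ 2` and using concavity of `s ↦ s ^ ((1 + ε) / 2)`, each
update increases `r ^ (1 + ε)` by at most `(1 + ε) * b + (1 + ε) / 2 * R ^ 2 * r ^ (ε - 1)`. Since
the margin forces `γ * t ≤ r t`, summation over the run bounds `r T ^ (1 + ε)` by
`(1 + ε) * b * T` plus a multiple of `T ^ ε`. Eliminating `T ≤ r T / γ` leaves
`γ * r T ^ ε ≤ (1 + ε) * b + C * R ^ 2 * r T ^ (ε - 1)`. The condition on `b` is what makes the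
last term at most `δ * b` as soon as `γ * r T ^ ε` exceeds `(1 + ε) * b`. Finally, the stopping
criterion bounds the achieved margin below by `b / r T ^ ε`.
-/

section Concavity

variable {x z p : ℝ}

lemma rpow_le_rpow_add_mul_sub (hx : 0 < x) (hz : 0 ≤ z) (hp : 0 ≤ p) (hp1 : p ≤ 1) :
    z ^ p ≤ x ^ p + p * x ^ (p - 1) * (z - x) := by
  have hquot : 1 + (z - x) / x = z / x := by field_simp; ring
  have hbernoulli : (1 + (z - x) / x) ^ p ≤ 1 + p * ((z - x) / x) :=
    rpow_one_add_le_one_add_mul_self (by linarith [div_nonneg hz hx.le]) hp hp1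
  calc z ^ p = x ^ p * (1 + (z - x) / x) ^ p := by
        rw [hquot, ← Real.mul_rpow hx.le (by positivity), mul_div_cancel₀ z hx.ne']
    _ ≤ x ^ p * (1 + p * ((z - x) / x)) := by gcongr
    _ = x ^ p + p * x ^ (p - 1) * (z - x) := by rw [Real.rpow_sub_one hx.ne']; ring

lemma rpow_le_rpow_add_mul_sq_sub_sq (hx : 0 < x) (hz : 0 ≤ z) (hp : 0 ≤ p) (hp2 : p ≤ 2) :
    z ^ p ≤ x ^ p + p / 2 * x ^ (p - 2) * (z ^ 2 - x ^ 2) := by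
  have sq_rpow {v : ℝ} (hv : 0 ≤ v) (q : ℝ) : (v ^ 2) ^ q = v ^ (2 * q) := by
    rw [← Real.rpow_natCast_mul hv, Nat.cast_ofNat]
  have htangent := rpow_le_rpow_add_mul_sub (pow_pos hx 2) (sq_nonneg z)
    (by linarith : 0 ≤ p / 2) (by linarith)
  rwa [sq_rpow hz, sq_rpow hx.le, sq_rpow hx.le, mul_sub 2, mul_one,
    mul_div_cancel₀ p two_ne_zero] at htangent

lemma rpow_one_add_le_of_sq_le {b c ε : ℝ} (hx : 0 < x) (hz : 0 ≤ z) (hε : -1 ≤ ε) (hε1 : ε ≤ 1)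
    (h : z ^ 2 ≤ x ^ 2 + c + 2 * (b * x ^ (1 - ε))) :
    z ^ (1 + ε) ≤ x ^ (1 + ε) + ((1 + ε) * b + (1 + ε) / 2 * c * x ^ (ε - 1)) := by
  have hinv : x ^ (ε - 1) * x ^ (1 - ε) = 1 := by
    rw [← Real.rpow_add hx, sub_add_sub_cancel, sub_self, Real.rpow_zero]
  have hcoef : 0 ≤ (1 + ε) / 2 * x ^ (ε - 1) :=
    mul_nonneg (by linarith) (Real.rpow_nonneg hx.le _)
  calc z ^ (1 + ε)
    _ ≤ x ^ (1 + ε) + (1 + ε) / 2 * x ^ (1 + ε - 2) * (z ^ 2 - x ^ 2) :=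
        rpow_le_rpow_add_mul_sq_sub_sq hx hz (by linarith) (by linarith)
    _ = x ^ (1 + ε) + (1 + ε) / 2 * x ^ (ε - 1) * (z ^ 2 - x ^ 2) := by ring_nf
    _ ≤ x ^ (1 + ε) + (1 + ε) / 2 * x ^ (ε - 1) * (c + 2 * (b * x ^ (1 - ε))) := by
        gcongr; linarith
    _ = x ^ (1 + ε) + ((1 + ε) * b + (1 + ε) / 2 * c * x ^ (ε - 1)) := by
        linear_combination (1 + ε) * b * hinv

lemma mul_sum_Ico_rpow_sub_one_le {ε : ℝ} (hε : 0 ≤ ε) (hε1 : ε ≤ 1) {m : ℕ} (hm : 1 ≤ m) :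
    ε * ∑ t ∈ Finset.Ico 1 (m + 1), (t : ℝ) ^ (ε - 1) ≤ (m : ℝ) ^ ε - (1 - ε) := by
  induction m, hm using Nat.le_induction with
  | base => simp
  | succ m hm ih =>
    have hstep := rpow_le_rpow_add_mul_sub (x := (m + 1 : ℕ)) (z := m) (by positivity)
      (by positivity) hε hε1
    rw [Finset.sum_Ico_succ_top (by lia)]
    push_cast at hstep ⊢
    linarith

end Concavity

/-- The factor `C` in the growth estimate
`‖a t‖ ^ (1 + ε) ≤ (1 + ε) * b * t + C * R ^ 2 * γ ^ (ε - 1) * t ^ ε` for a margitron run. The floor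
lets one formula cover both `ε < 1`, where `C = (1 + ε) ^ 2 / (2 * ε)`, and `ε = 1`, where the
sharper `C = 1` holds. -/
noncomputable def growthConst (ε : ℝ) : ℝ := (1 + ε) ^ (2 - (⌊ε⌋ : ℝ)) / (2 * ε)

section GrowthConst

variable {ε : ℝ}

lemma growthConst_one : growthConst 1 = 1 := by
  norm_num [growthConst]

lemma growthConst_of_lt_one (hε : 0 ≤ ε) (hε1 : ε < 1) :
    growthConst ε = (1 + ε) ^ 2 / (2 * ε) := by
  rw [growthConst, Int.floor_eq_zero_iff.2 ⟨hε, hε1⟩, Int.cast_zero, sub_zero, Real.rpow_two]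

lemma growthConst_nonneg (hε : 0 ≤ ε) : 0 ≤ growthConst ε := by
  unfold growthConst; positivity

lemma growthConst_rpow_self (hε : 0 ≤ ε) (hε1 : ε ≤ 1) :
    growthConst ε ^ ε = (1 + ε) ^ (2 * ε - (⌊ε⌋ : ℝ)) / (2 * ε) ^ ε := by
  have hfloor : (⌊ε⌋ : ℝ) * ε = ⌊ε⌋ := by
    rcases hε1.lt_or_eq with hlt | rfl
    · simp [Int.floor_eq_zero_iff.2 ⟨hε, hlt⟩]
    · simp
  rw [growthConst, Real.div_rpow (by positivity) (by positivity), ← Real.rpow_mul (by positivity),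
    sub_mul, hfloor]

lemma one_add_sum_Ico_le_growthConst_mul (hε : 0 < ε) (hε1 : ε ≤ 1) {T : ℕ} (hT : 1 ≤ T) :
    1 + (1 + ε) / 2 * ∑ t ∈ Finset.Ico 1 T, (t : ℝ) ^ (ε - 1) ≤ growthConst ε * (T : ℝ) ^ ε := by
  obtain ⟨m, rfl⟩ := Nat.exists_eq_add_of_le' hT
  rcases hε1.lt_or_eq with hlt | rfl
  · rw [growthConst_of_lt_one hε.le hlt, div_mul_eq_mul_div _ (2 * ε), le_div_iff₀ (by positivity)]
    rcases m.eq_zero_or_pos with rfl | hm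
    · norm_num
      nlinarith
    · have hsum := mul_sum_Ico_rpow_sub_one_le hε.le hε1 hm
      have hmono : (m : ℝ) ^ ε ≤ ((m + 1 : ℕ) : ℝ) ^ ε := by gcongr; lia
      have hone : (1 : ℝ) ≤ ((m + 1 : ℕ) : ℝ) ^ ε :=
        Real.one_le_rpow (by exact_mod_cast hT) hε.le
      calc (1 + (1 + ε) / 2 * ∑ t ∈ Finset.Ico 1 (m + 1), (t : ℝ) ^ (ε - 1)) * (2 * ε)
        _ = 2 * ε + (1 + ε) * (ε * ∑ t ∈ Finset.Ico 1 (m + 1), (t : ℝ) ^ (ε - 1)) := by ring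
        _ ≤ 2 * ε + (1 + ε) * ((m : ℝ) ^ ε - (1 - ε)) := by gcongr
        _ ≤ (1 + ε) * ((m : ℝ) ^ ε + ε * 1) := by linarith
        _ ≤ (1 + ε) * (((m + 1 : ℕ) : ℝ) ^ ε + ε * ((m + 1 : ℕ) : ℝ) ^ ε) := by gcongr
        _ = (1 + ε) ^ 2 * ((m + 1 : ℕ) : ℝ) ^ ε := by ring
  · simp [growthConst_one, add_comm]

end GrowthConst

section Growth

variable {R b ε γ : ℝ}

lemma rpow_one_add_le_growth {r : ℕ → ℝ} {T : ℕ} (hγ : 0 < γ) (hb : 0 ≤ b) (hε : 0 < ε)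
    (hε1 : ε ≤ 1) (hT : 1 ≤ T) (hr1 : r 1 ≤ R) (hlow : ∀ t ≤ T, γ * t ≤ r t)
    (hstep : ∀ t, 1 ≤ t → t < T → r (t + 1) ^ 2 ≤ r t ^ 2 + R ^ 2 + 2 * (b * r t ^ (1 - ε))) :
    r T ^ (1 + ε) ≤
      (1 + ε) * b * T + growthConst ε * (R ^ 2 * γ ^ (ε - 1)) * (T : ℝ) ^ ε := by
  have hγr1 : γ ≤ r 1 := by simpa using hlow 1 hT
  have hr1pos : 0 < r 1 := hγ.trans_le hγr1
  have hinit : r 1 ^ (1 + ε) ≤ R ^ 2 * γ ^ (ε - 1) :=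
    calc r 1 ^ (1 + ε) = r 1 ^ 2 * r 1 ^ (ε - 1) := by
          rw [← Real.rpow_two, ← Real.rpow_add hr1pos]; ring_nf
      _ ≤ R ^ 2 * γ ^ (ε - 1) :=
          mul_le_mul (by gcongr) (Real.rpow_le_rpow_of_nonpos hγ hγr1 (by linarith))
            (by positivity) (by positivity)
  have hincr : ∀ t ∈ Finset.Ico 1 T, r (t + 1) ^ (1 + ε) - r t ^ (1 + ε) ≤
      (1 + ε) * b + (1 + ε) / 2 * (R ^ 2 * γ ^ (ε - 1)) * (t : ℝ) ^ (ε - 1) := by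
    intro t ht
    obtain ⟨ht1, htT⟩ := Finset.mem_Ico.1 ht
    have hγt : 0 < γ * t := by positivity
    have hnext : 0 ≤ r (t + 1) := le_trans (by positivity) (hlow (t + 1) htT)
    have hle := rpow_one_add_le_of_sq_le (hγt.trans_le (hlow t htT.le)) hnext (by linarith) hε1
      (hstep t ht1 htT)
    have hdecay : r t ^ (ε - 1) ≤ γ ^ (ε - 1) * (t : ℝ) ^ (ε - 1) := by
      rw [← Real.mul_rpow hγ.le t.cast_nonneg]
      exact Real.rpow_le_rpow_of_nonpos hγt (hlow t htT.le) (by linarith)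
    linarith [mul_le_mul_of_nonneg_left hdecay (by positivity : 0 ≤ (1 + ε) / 2 * R ^ 2)]
  have hsum := Finset.sum_le_sum hincr
  rw [Finset.sum_Ico_sub (fun t => r t ^ (1 + ε)) hT, Finset.sum_add_distrib, Finset.sum_const,
    Nat.card_Ico, nsmul_eq_mul, Nat.cast_sub hT, Nat.cast_one, ← Finset.mul_sum] at hsum
  have hconst := mul_le_mul_of_nonneg_left (one_add_sum_Ico_le_growthConst_mul hε hε1 hT)
    (by positivity : 0 ≤ R ^ 2 * γ ^ (ε - 1))
  have hbcoef : 0 ≤ (1 + ε) * b := by positivity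
  linarith

lemma mul_rpow_le_add_mul_rpow_sub_one {r T β C : ℝ} (hγ : 0 < γ) (hβ : 0 ≤ β) (hC : 0 ≤ C)
    (hε : 0 ≤ ε) (hT : 0 < T) (hlow : γ * T ≤ r)
    (hgrowth : r ^ (1 + ε) ≤ β * T + C * γ ^ (ε - 1) * T ^ ε) :
    γ * r ^ ε ≤ β + C * r ^ (ε - 1) := by
  have hr : 0 < r := (mul_pos hγ hT).trans_le hlow
  refine le_of_mul_le_mul_left ?_ hr
  calc r * (γ * r ^ ε) = γ * r ^ (1 + ε) := by rw [Real.rpow_one_add' hr.le (by linarith)]; ring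
    _ ≤ γ * (β * T + C * γ ^ (ε - 1) * T ^ ε) := by gcongr
    _ = β * (γ * T) + C * (γ * T) ^ ε := by
        rw [Real.mul_rpow hγ.le hT.le, Real.rpow_sub_one hγ.ne']; field_simp
    _ ≤ β * r + C * r ^ ε := by gcongr
    _ = r * (β + C * r ^ (ε - 1)) := by rw [Real.rpow_sub_one hr.ne']; field_simp

lemma mul_rpow_le_add_of_le_add_mul_rpow_sub_one {r β C d : ℝ} (hγ : 0 < γ) (hr : 0 < r)
    (hβ : 0 ≤ β) (hC : 0 ≤ C) (hd : 0 ≤ d) (hε : 0 < ε) (hε1 : ε ≤ 1)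
    (hCd : C ^ ε * γ ^ (1 - ε) ≤ d ^ ε * β ^ (1 - ε))
    (h : γ * r ^ ε ≤ β + C * r ^ (ε - 1)) : γ * r ^ ε ≤ β + d := by
  rcases le_total (γ * r ^ ε) β with hsmall | hlarge
  · linarith
  have hpow : C ^ ε ≤ (d * r ^ (1 - ε)) ^ ε := by
    refine le_of_mul_le_mul_right ?_ (Real.rpow_pos_of_pos hγ (1 - ε))
    calc C ^ ε * γ ^ (1 - ε) ≤ d ^ ε * β ^ (1 - ε) := hCd
      _ ≤ d ^ ε * (γ * r ^ ε) ^ (1 - ε) := by gcongr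
      _ = (d * r ^ (1 - ε)) ^ ε * γ ^ (1 - ε) := by
          rw [Real.mul_rpow hγ.le (by positivity), Real.mul_rpow hd (by positivity),
            ← Real.rpow_mul hr.le, ← Real.rpow_mul hr.le,
            mul_comm ε]
          ring
  have hC_le : C ≤ d * r ^ (1 - ε) := (Real.rpow_le_rpow_iff hC (by positivity) hε).1 hpow
  calc γ * r ^ ε ≤ β + C * r ^ (ε - 1) := h
    _ ≤ β + d * r ^ (1 - ε) * r ^ (ε - 1) := by gcongr
    _ = β + d := by
        rw [mul_assoc, ← Real.rpow_add hr, sub_add_sub_cancel, sub_self, Real.rpow_zero, mul_one]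

lemma growthConst_mul_sq_rpow_le {δ : ℝ} (hR : 0 < R) (hγ : 0 < γ) (hb : 0 < b) (hε : 0 < ε)
    (hε1 : ε ≤ 1) (hδ : 0 < δ)
    (hbge : ((1 + ε) ^ (3 * ε - 1 - (⌊ε⌋ : ℝ)) / (2 * ε * δ) ^ ε) * (γ / R) ^ (1 - ε) ≤
      b / R ^ (1 + ε)) :
    (growthConst ε * R ^ 2) ^ ε * γ ^ (1 - ε) ≤ (δ * b) ^ ε * ((1 + ε) * b) ^ (1 - ε) := by
  have hRpow : R ^ (1 + ε) = (R ^ 2) ^ ε * R ^ (1 - ε) := by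
    rw [← Real.rpow_natCast_mul hR.le, ← Real.rpow_add hR]
    push_cast
    ring_nf
  have hbpow : b ^ ε * b ^ (1 - ε) = b := by
    rw [← Real.rpow_add hb, add_sub_cancel, Real.rpow_one]
  have hεpow : (1 + ε) ^ (2 * ε - (⌊ε⌋ : ℝ)) =
      (1 + ε) ^ (3 * ε - 1 - (⌊ε⌋ : ℝ)) * (1 + ε) ^ (1 - ε) := by
    rw [← Real.rpow_add (by positivity)]
    ring_nf
  rw [le_div_iff₀ (by positivity), hRpow, Real.div_rpow hγ.le hR.le,
    Real.mul_rpow (by positivity) hδ.le] at hbge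
  calc (growthConst ε * R ^ 2) ^ ε * γ ^ (1 - ε)
    _ = δ ^ ε * (1 + ε) ^ (1 - ε) * ((1 + ε) ^ (3 * ε - 1 - (⌊ε⌋ : ℝ)) / ((2 * ε) ^ ε * δ ^ ε) *
          (γ ^ (1 - ε) / R ^ (1 - ε)) * ((R ^ 2) ^ ε * R ^ (1 - ε))) := by
        rw [Real.mul_rpow (growthConst_nonneg hε.le) (by positivity),
          growthConst_rpow_self hε.le hε1, hεpow]
        field_simp
    _ ≤ δ ^ ε * (1 + ε) ^ (1 - ε) * b := by gcongr
    _ = (δ * b) ^ ε * ((1 + ε) * b) ^ (1 - ε) := by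
        rw [Real.mul_rpow hδ.le hb.le, Real.mul_rpow (by positivity) hb.le]
        linear_combination -(δ ^ ε * (1 + ε) ^ (1 - ε)) * hbpow

end Growth

section Margitron

variable {E : Type*} [NormedAddCommGroup E] [InnerProductSpace ℝ E] {ι : Type*}

/-- An `ℓ`-margitron run of length `T` on the patterns `y`: starting from `0`, each of the first `T`
updates adds a misclassified pattern. The weight vectors `a t` with `t > T` are unconstrained. -/
structure IsMargitronRun (y : ι → E) (b ε : ℝ) (T : ℕ) (a : ℕ → E) : Prop where
  zero : a 0 = 0
  exists_update : ∀ t < T, ∃ k, a (t + 1) = a t + y k ∧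
    ⟪a t, y k⟫ ≤ if t = 0 then 0 else b * ‖a t‖ ^ (1 - ε)

namespace IsMargitronRun

variable {y : ι → E} {a : ℕ → E} {u : E} {b ε γ R : ℝ} {T : ℕ}

lemma mul_le_inner (ha : IsMargitronRun y b ε T a) (hmargin : ∀ k, γ ≤ ⟪u, y k⟫) :
    ∀ t ≤ T, γ * t ≤ ⟪u, a t⟫ := by
  intro t
  induction t with
  | zero => simp [ha.zero]
  | succ t ih =>
    intro ht
    obtain ⟨k, hk, -⟩ := ha.exists_update t ht
    rw [hk, inner_add_right]
    push_cast
    linarith [ih (by lia), hmargin k]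

lemma mul_le_norm (ha : IsMargitronRun y b ε T a) (hu : ‖u‖ = 1) (hmargin : ∀ k, γ ≤ ⟪u, y k⟫)
    (t : ℕ) (ht : t ≤ T) : γ * t ≤ ‖a t‖ :=
  calc γ * t ≤ ⟪u, a t⟫ := ha.mul_le_inner hmargin t ht
    _ ≤ ‖u‖ * ‖a t‖ := real_inner_le_norm u (a t)
    _ = ‖a t‖ := by rw [hu, one_mul]

lemma norm_one_le (ha : IsMargitronRun y b ε T a) (hR : ∀ k, ‖y k‖ ≤ R) (hT : 1 ≤ T) :
    ‖a 1‖ ≤ R := by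
  obtain ⟨k, hk, -⟩ := ha.exists_update 0 hT
  rw [zero_add, ha.zero, zero_add] at hk
  exact hk ▸ hR k

lemma norm_succ_sq_le (ha : IsMargitronRun y b ε T a) (hR : ∀ k, ‖y k‖ ≤ R) (t : ℕ) (ht : 1 ≤ t)
    (htT : t < T) : ‖a (t + 1)‖ ^ 2 ≤ ‖a t‖ ^ 2 + R ^ 2 + 2 * (b * ‖a t‖ ^ (1 - ε)) := by
  obtain ⟨k, hk, hmis⟩ := ha.exists_update t htT
  rw [if_neg (by lia)] at hmis
  have hsq : ‖y k‖ ^ 2 ≤ R ^ 2 := by gcongr; exact hR k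
  rw [hk, norm_add_sq_real]
  linarith

lemma mul_norm_rpow_le {δ : ℝ} (ha : IsMargitronRun y b ε T a) (hR : ∀ k, ‖y k‖ ≤ R)
    (hu : ‖u‖ = 1) (hγ : 0 < γ) (hmargin : ∀ k, γ ≤ ⟪u, y k⟫) (hε : 0 < ε) (hε1 : ε ≤ 1)
    (hb : 0 < b) (hδ : 0 < δ)
    (hbge : ((1 + ε) ^ (3 * ε - 1 - (⌊ε⌋ : ℝ)) / (2 * ε * δ) ^ ε) * (γ / R) ^ (1 - ε) ≤
      b / R ^ (1 + ε)) (hT : 1 ≤ T) :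
    γ * ‖a T‖ ^ ε ≤ b * (δ + 1 + ε) := by
  have hlow := ha.mul_le_norm hu hmargin
  have hγR : γ ≤ R := by simpa using (hlow 1 hT).trans (ha.norm_one_le hR hT)
  have hTpos : (0 : ℝ) < T := by exact_mod_cast hT
  have hrpos : 0 < ‖a T‖ := (mul_pos hγ hTpos).trans_le (hlow T le_rfl)
  have hC : 0 ≤ growthConst ε * R ^ 2 := mul_nonneg (growthConst_nonneg hε.le) (sq_nonneg R)
  have hgrowth := rpow_one_add_le_growth hγ hb.le hε hε1 hT (ha.norm_one_le hR hT) hlow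
    (ha.norm_succ_sq_le hR)
  rw [← mul_assoc (growthConst ε)] at hgrowth
  have hnorm := mul_rpow_le_add_mul_rpow_sub_one hγ (by positivity) hC hε.le hTpos
    (hlow T le_rfl) hgrowth
  calc γ * ‖a T‖ ^ ε ≤ (1 + ε) * b + δ * b :=
        mul_rpow_le_add_of_le_add_mul_rpow_sub_one hγ hrpos (by positivity) hC (by positivity) hε
          hε1 (growthConst_mul_sq_rpow_le (hγ.trans_le hγR) hγ hb hε hε1 hδ hbge) hnorm
    _ = b * (δ + 1 + ε) := by ring

end IsMargitronRun

theorem stmt14_general {y : ι → E} {a : ℕ → E} {u : E} {R γ b ε δ : ℝ} {T : ℕ}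
    (ha : IsMargitronRun y b ε T a) (hR : ∀ k, ‖y k‖ ≤ R) (hu : ‖u‖ = 1) (hγ : 0 < γ)
    (hmargin : ∀ k, γ ≤ ⟪u, y k⟫) (hε : 0 < ε) (hε1 : ε ≤ 1) (hb : 0 < b) (hδ : 0 < δ)
    (hbge : ((1 + ε) ^ (3 * ε - 1 - (⌊ε⌋ : ℝ)) / (2 * ε * δ) ^ ε) * (γ / R) ^ (1 - ε) ≤
      b / R ^ (1 + ε))
    (hT : 1 ≤ T) {k : ι} (hk : b * ‖a T‖ ^ (1 - ε) ≤ ⟪a T, y k⟫) :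
    (δ + 1 + ε)⁻¹ * γ ≤ ⟪‖a T‖⁻¹ • a T, y k⟫ := by
  have hrpos : 0 < ‖a T‖ :=
    (mul_pos hγ (by exact_mod_cast hT)).trans_le (ha.mul_le_norm hu hmargin T le_rfl)
  calc (δ + 1 + ε)⁻¹ * γ ≤ b / ‖a T‖ ^ ε := by
        rw [inv_mul_eq_div, div_le_div_iff₀ (by positivity) (by positivity)]
        exact ha.mul_norm_rpow_le hR hu hγ hmargin hε hε1 hb hδ hbge hT
    _ = ‖a T‖⁻¹ * (b * ‖a T‖ ^ (1 - ε)) := by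
        rw [Real.rpow_sub hrpos, Real.rpow_one]; field_simp
    _ ≤ ‖a T‖⁻¹ * ⟪a T, y k⟫ := by gcongr
    _ = ⟪‖a T‖⁻¹ • a T, y k⟫ := (real_inner_smul_left ..).symm

end Margitron

/-- if b/R^(1+ε) ≥ ((1+ε)^(3ε−1−⌊ε⌋)/(2εδ)^ε)·(γ_d/R)^(1−ε), a converged
ℓ-margitron run with 0 < ε ≤ 1 achieves γ'_d/γ_d ≥ (δ + 1 + ε)⁻¹. -/
theorem stmt14 {E : Type*} [NormedAddCommGroup E] [InnerProductSpace ℝ E]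
    {n : ℕ} (hn : 0 < n) (y : Fin n → E)
    (R : ℝ) (hR : IsGreatest (Set.range (fun k : Fin n => ‖y k‖)) R)
    (u : E) (hu : ‖u‖ = 1) (γd : ℝ) (hγd : 0 < γd)
    (hmargin : ∀ k : Fin n, γd ≤ ⟪u, y k⟫)
    (ε b δ : ℝ) (hε : 0 < ε) (hε1 : ε ≤ 1) (hb : 0 < b) (hδ : 0 < δ)
    (hbge : ((1 + ε) ^ (3 * ε - 1 - (⌊ε⌋ : ℝ)) / (2 * ε * δ) ^ ε) *
        (γd / R) ^ (1 - ε) ≤ b / R ^ (1 + ε))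
    (tc : ℕ) (htc : 1 ≤ tc) (a : ℕ → E) (ha0 : a 0 = 0)
    (hrun : ∀ t : ℕ, t < tc → ∃ k : Fin n, a (t + 1) = a t + y k ∧
      ⟪a t, y k⟫ ≤ if t = 0 then 0 else b * ‖a t‖ ^ (1 - ε))
    (hconv : ∀ k : Fin n, b * ‖a tc‖ ^ (1 - ε) < ⟪a tc, y k⟫) :
    (Finset.univ.inf' (Finset.univ_nonempty_iff.mpr ⟨⟨0, hn⟩⟩)
        (fun k : Fin n => ⟪(‖a tc‖)⁻¹ • a tc, y k⟫)) / γd ≥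
      (δ + 1 + ε)⁻¹ :=
  (le_div_iff₀ hγd).2 <| Finset.le_inf' _ _ fun k _ =>
    stmt14_general ⟨ha0, hrun⟩ (fun j => hR.2 ⟨j, rfl⟩) hu hγd hmargin hε hε1 hb hδ hbge htc
      (hconv k).le
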